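/- arXiv:2312.08369 — 4 statements merged into one kernel-verified Lean document; each statement's English description precedes it below -/
import Mathlib

section
/- Suppose a finite-horizon MDP is k-QVI-solvable and π = (π_1, …, π_T) is a sequence of deterministic policy maps found iteratively such that for each t ∈ [T], the probability, over states s_t reached by following π_1, …, π_{t−1} for timesteps 1 through t−1, that π_t(s_t) ∉ argmax_a Q^k_t(s_t, a) is at most ε/T. Then π is ε-optimal in the MDP, i.e., J(π) ≥ max_{π*} J(π*) − ε. -/
/-!
Let `ρ` agree with `π` wherever `π` picks a maximizer of `Q^k`, and pick any maximizer elsewhere.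
Then `ρ` is greedy, hence optimal, so it suffices to show `J(ρ) - J(π) ≤ ε`.

By the performance difference identity, `J(ρ) - J(π)` is the sum over `t` of the expectation, over
the states reached by `π`, of `V^ρ_t(s) - Q^ρ_t(s, π_t(s))`. This term vanishes where `π` is greedy,
since there `π` and `ρ` agree. Everywhere else it is at most `1`: individual rewards may be negative
or large, but adding the reward `r` collected along any trajectory reaching `s` puts both
`r + V^ρ_t(s)` and `r + Q^ρ_t(s, a)` in `[0,1]` (`FinMDP.IsPath.past_add_V`,
`FinMDP.IsPath.past_add_Qpol`). So each of the `T` timesteps loses at most the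
probability that `π` is not greedy there, which is at most `ε / T`.
-/

open Finset

/-- A finite-horizon MDP with finite state and action spaces, an initial state
distribution `p1`, transition kernels `p`, and rewards `R`.  Distributions are
represented by their mass functions.  Timesteps are 0-based: `t ∈ {0, …, T-1}`. -/
structure FinMDP where
  T : ℕ
  S : Type
  A : Type
  [fS : Fintype S]
  [fA : Fintype A]
  [dS : DecidableEq S]
  [dA : DecidableEq A]
  [nS : Nonempty S]
  [nA : Nonempty A]
  p1 : S → ℝ
  p : ℕ → S → A → S → ℝ
  R : ℕ → S → A → ℝ
  p1_nonneg : ∀ s, 0 ≤ p1 s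
  p1_sum : ∑ s, p1 s = 1
  p_nonneg : ∀ t s a s', 0 ≤ p t s a s'
  p_sum : ∀ t s a, ∑ s', p t s a s' = 1

attribute [instance] FinMDP.fS FinMDP.fA FinMDP.dS FinMDP.dA FinMDP.nS FinMDP.nA

namespace FinMDP

variable (M : FinMDP)

/-- `σ` is a (stochastic, Markovian, time-dependent) policy: a mass function over
actions for each timestep and state. -/
def IsPolicy (σ : ℕ → M.S → M.A → ℝ) : Prop :=
  (∀ t s a, 0 ≤ σ t s a) ∧ ∀ t s, ∑ a, σ t s a = 1

/-- The value function `V^σ_t(s)` of a stochastic policy, defined by backwards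
recursion (`V = 0` from timestep `T` onwards). -/
noncomputable def V (σ : ℕ → M.S → M.A → ℝ) (t : ℕ) (s : M.S) : ℝ :=
  if h : t < M.T then
    ∑ a, σ t s a * (M.R t s a + ∑ s', M.p t s a s' * V σ (t + 1) s')
  else 0
termination_by M.T - t
decreasing_by omega

/-- The expected return `J(σ) = E_{s₁∼p₁}[V^σ_1(s₁)]` of a policy. -/
noncomputable def J (σ : ℕ → M.S → M.A → ℝ) : ℝ := ∑ s, M.p1 s * M.V σ 0 s

/-- A deterministic policy, viewed as a stochastic policy. -/
def det (π : ℕ → M.S → M.A) : ℕ → M.S → M.A → ℝ := fun t s a => if a = π t s then 1 else 0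

/-- The Q-function `Q^σ_t(s,a)` of a policy. -/
noncomputable def Qpol (σ : ℕ → M.S → M.A → ℝ) (t : ℕ) (s : M.S) (a : M.A) : ℝ :=
  M.R t s a + ∑ s', M.p t s a s' * M.V σ (t + 1) s'

/-- The uniformly random policy. -/
noncomputable def randPol : ℕ → M.S → M.A → ℝ := fun _ _ _ => (Fintype.card M.A : ℝ)⁻¹

/-- `max_a q(s,a)`. -/
noncomputable def vmax (q : M.S → M.A → ℝ) (s : M.S) : ℝ :=
  univ.sup' univ_nonempty (q s)

/-- One step of Q-value iteration:
`(QVI Q)_t(s,a) = R_t(s,a) + E_{s'∼p_t(·|s,a)}[max_{a'} Q_{t+1}(s',a')]`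
(the expectation/max term being absent at the last timestep). -/
noncomputable def QVI (q : ℕ → M.S → M.A → ℝ) (t : ℕ) (s : M.S) (a : M.A) : ℝ :=
  M.R t s a + if t + 1 < M.T then ∑ s', M.p t s a s' * M.vmax (q (t + 1)) s' else 0

/-- `Qiter i` is `Q^{i+1}` from the paper (0-based): `Qiter 0 = Q^{π^rand}` is the
random policy's Q-function, and `Qiter (i+1) = QVI (Qiter i)`.  Thus the paper's
`Q^k` is `Qiter (k-1)`. -/
noncomputable def Qiter : ℕ → ℕ → M.S → M.A → ℝ
  | 0 => M.Qpol M.randPol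
  | i + 1 => M.QVI (Qiter i)

/-- A deterministic policy is greedy with respect to a Q-function if at every
timestep and state it picks a maximizing action. -/
def Greedy (q : ℕ → M.S → M.A → ℝ) (π : ℕ → M.S → M.A) : Prop :=
  ∀ t, t < M.T → ∀ s a, q t s a ≤ q t s (π t s)

/-- The MDP is `k`-QVI-solvable if every policy greedy w.r.t. `Q^k = Qiter (k-1)`
is optimal. -/
def QVISolvable (k : ℕ) : Prop :=
  ∀ π : ℕ → M.S → M.A, M.Greedy (M.Qiter (k - 1)) π →
    ∀ σ, M.IsPolicy σ → M.J σ ≤ M.J (M.det π)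

/-- The total reward `∑_{t<T} R_t(s_t,a_t)` lies in `[0,1]` almost surely, i.e.
along every trajectory reachable with positive probability (under the uniformly
random policy, whose support contains that of every policy). -/
def RewardBounded : Prop :=
  ∀ (s : ℕ → M.S) (a : ℕ → M.A), 0 < M.p1 (s 0) →
    (∀ t, t + 1 < M.T → 0 < M.p t (s t) (a t) (s (t + 1))) →
    0 ≤ ∑ t ∈ range M.T, M.R t (s t) (a t) ∧ ∑ t ∈ range M.T, M.R t (s t) (a t) ≤ 1

/-- The distribution of the state at timestep `t` when following the
deterministic policy `π` from the initial state distribution. -/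
noncomputable def stateDist (π : ℕ → M.S → M.A) : ℕ → M.S → ℝ
  | 0 => M.p1
  | t + 1 => fun s' => ∑ s, stateDist π t s * M.p t s (π t s) s'

end FinMDP

namespace FinMDP

variable {M : FinMDP}

/-! ### Trajectories of positive probability -/

/-- The first `t` transitions of the trajectory `(s, a)` have positive probability, as has `s 0`;
so `s t` is reachable at timestep `t`. The values of `s` beyond `t` and of `a` from `t` on are
irrelevant. -/
def IsPath (M : FinMDP) (t : ℕ) (s : ℕ → M.S) (a : ℕ → M.A) : Prop :=
  0 < M.p1 (s 0) ∧ ∀ i < t, 0 < M.p i (s i) (a i) (s (i + 1))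

/-- The reward collected along a trajectory before timestep `t`. -/
def pastReward (M : FinMDP) (t : ℕ) (s : ℕ → M.S) (a : ℕ → M.A) : ℝ :=
  ∑ i ∈ range t, M.R i (s i) (a i)

/-- A path of length `t` followed by action `b` and a possible next state `x` is a path. -/
lemma IsPath.extend {t : ℕ} {s : ℕ → M.S} {a : ℕ → M.A} (h : M.IsPath t s a) (b : M.A) (x : M.S)
    (hx : 0 < M.p t (s t) b x) :
    M.IsPath (t + 1) (Function.update s (t + 1) x) (Function.update a t b) := by
  refine ⟨by simpa [Function.update_apply] using h.1, fun i hi => ?_⟩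
  rcases Nat.lt_succ_iff_lt_or_eq.mp hi with hi | rfl
  · have h1 : i ≠ t + 1 := by omega
    have h2 : i ≠ t := by omega
    simpa [Function.update_apply, h1, h2] using h.2 i hi
  · simpa [Function.update_apply] using hx

lemma pastReward_extend (t : ℕ) (s : ℕ → M.S) (a : ℕ → M.A) (b : M.A) (x : M.S) :
    M.pastReward (t + 1) (Function.update s (t + 1) x) (Function.update a t b)
      = M.pastReward t s a + M.R t (s t) b := by
  unfold pastReward
  rw [sum_range_succ]
  congr 1
  · refine sum_congr rfl fun i hi => ?_
    have hi := mem_range.mp hi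
    have h1 : i ≠ t + 1 := by omega
    have h2 : i ≠ t := by omega
    simp [h1, h2]
  · simp

/-! ### Bounds on past reward plus value -/

/-- A shifted average of numbers lies in `[0,1]` if the shifted numbers of positive weight do. -/
lemma add_average_mem {ι : Type*} [Fintype ι] (w f : ι → ℝ) (r : ℝ) (hw : ∀ i, 0 ≤ w i)
    (hw1 : ∑ i, w i = 1) (hf : ∀ i, 0 < w i → r + f i ∈ Set.Icc (0 : ℝ) 1) :
    r + ∑ i, w i * f i ∈ Set.Icc (0 : ℝ) 1 := by
  have key : r + ∑ i, w i * f i = ∑ i, w i * (r + f i) := by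
    simp only [mul_add, sum_add_distrib, ← sum_mul, hw1, one_mul]
  rw [key]
  constructor
  · refine sum_nonneg fun i _ => ?_
    rcases (hw i).eq_or_lt with h | h
    · simp [← h]
    · exact mul_nonneg h.le (hf i h).1
  · rw [← hw1]
    refine sum_le_sum fun i _ => ?_
    rcases (hw i).eq_or_lt with h | h
    · simp [← h]
    · exact mul_le_of_le_one_right h.le (hf i h).2

lemma V_of_lt (σ : ℕ → M.S → M.A → ℝ) {t : ℕ} (ht : t < M.T) (s : M.S) :
    M.V σ t s = ∑ a, σ t s a * M.Qpol σ t s a := by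
  rw [V, dif_pos ht]; rfl

lemma V_of_ge (σ : ℕ → M.S → M.A → ℝ) {t : ℕ} (ht : M.T ≤ t) (s : M.S) : M.V σ t s = 0 := by
  rw [V, dif_neg (by omega)]

lemma V_det (π : ℕ → M.S → M.A) {t : ℕ} (ht : t < M.T) (s : M.S) :
    M.V (M.det π) t s = M.Qpol (M.det π) t s (π t s) := by
  rw [V_of_lt _ ht]
  simp [det]

lemma isPolicy_det (π : ℕ → M.S → M.A) : M.IsPolicy (M.det π) := by
  refine ⟨fun t s a => ?_, fun t s => by simp [det]⟩
  unfold det; split_ifs <;> norm_num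

/-- One backward step from values at `t + 1` to action values at `t`. -/
lemma IsPath.past_add_Qpol_aux {σ : ℕ → M.S → M.A → ℝ} {t : ℕ}
    (hV : ∀ s a, M.IsPath (t + 1) s a →
      M.pastReward (t + 1) s a + M.V σ (t + 1) (s (t + 1)) ∈ Set.Icc (0 : ℝ) 1)
    {s : ℕ → M.S} {a : ℕ → M.A} (h : M.IsPath t s a) (b : M.A) :
    M.pastReward t s a + M.Qpol σ t (s t) b ∈ Set.Icc (0 : ℝ) 1 := by
  rw [Qpol, ← add_assoc]
  refine add_average_mem _ _ _ (M.p_nonneg t (s t) b) (M.p_sum t (s t) b) fun x hx => ?_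
  have := hV _ _ (h.extend b x hx)
  rwa [pastReward_extend, Function.update_self] at this

/-- Past reward plus expected future reward is a conditional expectation of the total reward, so
it lies in `[0,1]`. -/
lemma IsPath.past_add_V (hR : M.RewardBounded) {σ : ℕ → M.S → M.A → ℝ} (hσ : M.IsPolicy σ)
    {t : ℕ} (ht : t ≤ M.T) : ∀ {s : ℕ → M.S} {a : ℕ → M.A}, M.IsPath t s a →
      M.pastReward t s a + M.V σ t (s t) ∈ Set.Icc (0 : ℝ) 1 := by
  induction ht using Nat.decreasingInduction with
  | self =>
    intro s a h
    rw [V_of_ge _ le_rfl, add_zero]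
    exact hR s a h.1 fun i hi => h.2 i (by omega)
  | of_succ t ht ih =>
    intro s a h
    rw [V_of_lt _ ht]
    exact add_average_mem _ _ _ (hσ.1 t (s t)) (hσ.2 t (s t)) fun b _ =>
      h.past_add_Qpol_aux (fun _ _ => ih) b

/-- The analogue of `IsPath.past_add_V` for an arbitrary action at timestep `t`. -/
lemma IsPath.past_add_Qpol (hR : M.RewardBounded) {σ : ℕ → M.S → M.A → ℝ}
    (hσ : M.IsPolicy σ) {t : ℕ} (ht : t < M.T) {s : ℕ → M.S} {a : ℕ → M.A}
    (h : M.IsPath t s a) (b : M.A) :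
    M.pastReward t s a + M.Qpol σ t (s t) b ∈ Set.Icc (0 : ℝ) 1 :=
  h.past_add_Qpol_aux (fun _ _ h' => h'.past_add_V hR hσ ht) b

/-! ### Performance difference -/

lemma stateDist_nonneg (π : ℕ → M.S → M.A) (t : ℕ) (x : M.S) : 0 ≤ M.stateDist π t x := by
  induction t generalizing x with
  | zero => exact M.p1_nonneg x
  | succ t ih => exact sum_nonneg fun y _ => mul_nonneg (ih y) (M.p_nonneg _ _ _ _)

lemma exists_isPath (π : ℕ → M.S → M.A) (t : ℕ) (x : M.S) (hx : 0 < M.stateDist π t x) :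
    ∃ s a, M.IsPath t s a ∧ s t = x := by
  induction t generalizing x with
  | zero =>
    exact ⟨fun _ => x, fun _ => Classical.arbitrary _, ⟨hx, fun i hi => by omega⟩, rfl⟩
  | succ t ih =>
    obtain ⟨y, -, hy⟩ := exists_lt_of_sum_lt (s := univ) (f := fun _ : M.S => (0 : ℝ))
      (by simpa [stateDist] using hx)
    have hd : 0 < M.stateDist π t y :=
      pos_of_mul_pos_left hy (M.p_nonneg _ _ _ _)
    obtain ⟨s, a, h, rfl⟩ := ih y hd
    exact ⟨_, _, h.extend (π t (s t)) x (pos_of_mul_pos_right hy hd.le), by simp⟩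

/-- A single deviation from `ρ` at a state reachable under `π` costs at most `1`. -/
lemma V_sub_Qpol_le_one (hR : M.RewardBounded) {ρ : ℕ → M.S → M.A → ℝ} (hρ : M.IsPolicy ρ)
    (π : ℕ → M.S → M.A) {t : ℕ} (ht : t < M.T) (x : M.S) (hx : 0 < M.stateDist π t x)
    (b : M.A) : M.V ρ t x - M.Qpol ρ t x b ≤ 1 := by
  obtain ⟨s, a, h, rfl⟩ := exists_isPath π t x hx
  have h1 := (h.past_add_V hR hρ ht.le).2
  have h2 := (h.past_add_Qpol hR hρ ht b).1
  linarith

/-- The expected advantage of continuing with `ρ` rather than `π` from timestep `t` on, after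
following `π` up to `t`. -/
noncomputable def gap (M : FinMDP) (ρ π : ℕ → M.S → M.A) (t : ℕ) : ℝ :=
  ∑ s, M.stateDist π t s * (M.V (M.det ρ) t s - M.V (M.det π) t s)

/-- One step of the performance difference identity. -/
lemma gap_eq (ρ π : ℕ → M.S → M.A) {t : ℕ} (ht : t < M.T) :
    M.gap ρ π t = ∑ s, M.stateDist π t s *
      (M.V (M.det ρ) t s - M.Qpol (M.det ρ) t s (π t s)) + M.gap ρ π (t + 1) := by
  have hnext : M.gap ρ π (t + 1) = ∑ s, M.stateDist π t s *
      (M.Qpol (M.det ρ) t s (π t s) - M.Qpol (M.det π) t s (π t s)) := by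
    simp only [gap, stateDist, Qpol, sum_mul]
    rw [sum_comm]
    refine sum_congr rfl fun s _ => ?_
    rw [add_sub_add_left_eq_sub, ← sum_sub_distrib, mul_sum]
    exact sum_congr rfl fun x _ => by ring
  rw [hnext, gap, ← sum_add_distrib]
  refine sum_congr rfl fun s _ => ?_
  rw [V_det π ht]
  ring

end FinMDP

open FinMDP in
open scoped Classical in
/-- Lemma `iterative_submdp`: Suppose a finite-horizon MDP with total
reward in `[0,1]` (a.s.) is `k`-QVI-solvable, and a deterministic policy
`π = (π_1, …, π_T)` satisfies, for every timestep `t`,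
`P_π(π_t(s_t) ∉ argmax_a Q^k_t(s_t,a)) ≤ ε / T`, where `s_t` is distributed by
following `π_1, …, π_{t-1}`.  Then `π` is `ε`-optimal: `J(π) ≥ max_{π*} J(π*) − ε`. -/
theorem iteratively_greedy_policy_is_eps_optimal
    (M : FinMDP) (hA : 2 ≤ Fintype.card M.A) (hT : 1 ≤ M.T)
    (hR : M.RewardBounded)
    (k : ℕ) (hk1 : 1 ≤ k) (hkT : k ≤ M.T) (hsolv : M.QVISolvable k)
    (ε : ℝ) (hε : 0 ≤ ε)
    (π : ℕ → M.S → M.A)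
    (hgreedy : ∀ t, t < M.T →
      (∑ s, if ∀ a, M.Qiter (k - 1) t s a ≤ M.Qiter (k - 1) t s (π t s) then 0
            else M.stateDist π t s) ≤ ε / M.T) :
    ∀ σ, M.IsPolicy σ → M.J σ - ε ≤ M.J (M.det π) := by
  classical
  intro σ hσ
  have hbest : ∀ t s, ∃ b, ∀ a, M.Qiter (k - 1) t s a ≤ M.Qiter (k - 1) t s b := fun t s =>
    Finite.exists_max _
  choose g hg using hbest
  let ρ : ℕ → M.S → M.A := fun t s =>
    if ∀ a, M.Qiter (k - 1) t s a ≤ M.Qiter (k - 1) t s (π t s) then π t s else g t s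
  have hρ : M.Greedy (M.Qiter (k - 1)) ρ := by
    intro t _ s a
    by_cases h : ∀ a, M.Qiter (k - 1) t s a ≤ M.Qiter (k - 1) t s (π t s)
    · simpa only [ρ, if_pos h] using h a
    · simpa only [ρ, if_neg h] using hg t s a
  have hstep : ∀ t < M.T, M.gap ρ π t ≤ ε / M.T + M.gap ρ π (t + 1) := by
    intro t ht
    rw [gap_eq ρ π ht]
    gcongr
    refine le_trans (sum_le_sum fun s _ => ?_) (hgreedy t ht)
    split_ifs with h
    · have hs : ρ t s = π t s := if_pos h
      rw [V_det ρ ht, hs, sub_self, mul_zero]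
    · rcases (stateDist_nonneg π t s).eq_or_lt with hd | hd
      · simp [← hd]
      · exact mul_le_of_le_one_right hd.le
          (V_sub_Qpol_le_one hR (isPolicy_det ρ) π ht s hd _)
  have hsum : ∀ n ≤ M.T, M.gap ρ π 0 ≤ n * (ε / M.T) + M.gap ρ π n := by
    intro n
    induction n with
    | zero => simp
    | succ n ih =>
      intro hn
      have h1 := ih (by omega)
      have h2 := hstep n (by omega)
      push_cast
      linarith
  have hlast : M.gap ρ π M.T = 0 := by simp [gap, V_of_ge]
  have hT0 : (M.T : ℝ) ≠ 0 := by
    have : M.T ≠ 0 := by omega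
    exact_mod_cast this
  have hfinal := hsum M.T le_rfl
  rw [hlast, add_zero, mul_div_cancel₀ _ hT0] at hfinal
  have hJ : M.gap ρ π 0 = M.J (M.det ρ) - M.J (M.det π) := by
    simp only [gap, J, stateDist, mul_sub, sum_sub_distrib]
  have hopt := hsolv ρ hρ σ hσ
  linarith
end

section
/- Let 𝒮 be a measurable space, 𝒜 a finite nonempty set with A = |𝒜|, and let 𝒟 be a probability distribution over 𝒮 × 𝒜 under which the conditional distribution of the action given any state is uniform, i.e., P_𝒟(a | s) = 1/A for all s, a. Then for any functions Q, Q̂ : 𝒮 × 𝒜 → [0,1], defining V(s) = max_{a ∈ 𝒜} Q(s,a) and V̂(s) = max_{a ∈ 𝒜} Q̂(s,a), one has E_𝒟[(V̂(s) − V(s))²] ≤ A · E_𝒟[(Q̂(s,a) − Q(s,a))²]. -/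
open MeasureTheory Finset

/-! The difference of two maxima over the same finite set is bounded, in absolute value, by the
difference of the two functions at a maximiser of the larger one (`sq_sup'_sub_sup'_le_sum`). Hence
`(V̂(s) - V(s))²` is at most one of the terms `(Q̂(s,a) - Q(s,a))²`, so at most their sum over `a`,
and the sum is `A` times the average over uniform actions. Integrating over `s` gives the claim. -/

theorem sq_sup'_sub_sup'_le_sum {A : Type*} [Fintype A] [Nonempty A] (f g : A → ℝ) :
    (univ.sup' univ_nonempty f - univ.sup' univ_nonempty g) ^ 2 ≤ ∑ a, (f a - g a) ^ 2 := by
  have hterm (a : A) : (f a - g a) ^ 2 ≤ ∑ a, (f a - g a) ^ 2 :=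
    single_le_sum (f := fun a => (f a - g a) ^ 2) (fun i _ => sq_nonneg _) (mem_univ a)
  obtain ⟨a, -, ha⟩ := exists_mem_eq_sup' univ_nonempty f
  obtain ⟨b, -, hb⟩ := exists_mem_eq_sup' univ_nonempty g
  have hfb : f b ≤ f a := ha ▸ le_sup' f (mem_univ b)
  have hga : g a ≤ g b := hb ▸ le_sup' g (mem_univ a)
  rw [ha, hb]
  rcases le_total (g b) (f a) with h | h
  · exact le_trans (pow_le_pow_left₀ (by linarith) (by linarith) 2) (hterm a)
  · refine le_trans ?_ (hterm b)
    rw [← neg_sq (f a - g b), ← neg_sq (f b - g b)]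
    exact pow_le_pow_left₀ (by linarith) (by linarith) 2

/-- Let `𝒟` be a distribution over `𝒮 × 𝒜` whose conditional action
distribution is uniform, i.e. `𝒟 = μ ⊗ Unif(𝒜)` where `μ` is its `𝒮`-marginal.
For `Q, Q̂ : 𝒮 × 𝒜 → [0,1]` and the induced value functions `V(s) = max_a Q(s,a)`,
`V̂(s) = max_a Q̂(s,a)`, we have
`E_𝒟[(V̂(s) − V(s))²] ≤ A ⬝ E_𝒟[(Q̂(s,a) − Q(s,a))²]`.
Here an expectation `E_𝒟[f(s,a)]` under the uniform-action joint distribution is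
written as `∫ s, (∑ a, f s a) / A ∂μ`. -/
theorem value_error_le_card_mul_q_error
    {S : Type*} [MeasurableSpace S] {A : Type*} [Fintype A] [Nonempty A]
    (μ : Measure S) [IsProbabilityMeasure μ]
    (Q Qhat : S → A → ℝ)
    (hQmeas : ∀ a, Measurable fun s => Q s a)
    (hQhatmeas : ∀ a, Measurable fun s => Qhat s a)
    (hQ01 : ∀ s a, Q s a ∈ Set.Icc (0 : ℝ) 1)
    (hQhat01 : ∀ s a, Qhat s a ∈ Set.Icc (0 : ℝ) 1) :
    (∫ s, (univ.sup' univ_nonempty (Qhat s) - univ.sup' univ_nonempty (Q s)) ^ 2 ∂μ)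
      ≤ (Fintype.card A : ℝ) *
          ∫ s, (∑ a, (Qhat s a - Q s a) ^ 2) / (Fintype.card A : ℝ) ∂μ := by
  have hA : (Fintype.card A : ℝ) ≠ 0 := Nat.cast_ne_zero.mpr Fintype.card_ne_zero
  rw [integral_div, mul_div_cancel₀ _ hA]
  -- Only the dominating function has to be integrable.
  refine integral_mono_of_nonneg (.of_forall fun s => sq_nonneg _) ?_
    (.of_forall fun s => sq_sup'_sub_sup'_le_sum (Qhat s) (Q s))
  refine integrable_finsetSum _ fun a _ => ?_
  refine .of_bound (((hQhatmeas a).sub (hQmeas a)).pow_const 2).aestronglyMeasurable 1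
    (.of_forall fun s => ?_)
  rw [Real.norm_of_nonneg (sq_nonneg _), sq_le_one_iff_abs_le_one, abs_le]
  obtain ⟨h1, h2⟩ := hQ01 s a
  obtain ⟨h3, h4⟩ := hQhat01 s a
  constructor <;> linarith
end

section
/- Let 𝒮 be a measurable space, 𝒜 a finite nonempty set with A = |𝒜|, and 𝒟 a probability distribution over 𝒮 × 𝒜 whose conditional law of the action given any state is uniform. Let Q : 𝒮 × 𝒜 → ℝ satisfy the gap condition with parameter Δ > 0: for every s ∈ 𝒮, every maximizer a* ∈ argmax_a Q(s,a) and every non-maximizer a ∉ argmax_a Q(s,a), Q(s,a*) − Q(s,a) ≥ Δ. Let Q̂ : 𝒮 × 𝒜 → ℝ be measurable and let π be any map with π(s) ∈ argmax_a Q̂(s,a) for all s. Then the probability under the 𝒮-marginal of 𝒟 that π(s) ∉ argmax_a Q(s,a) is at most (4A/Δ²) · E_𝒟[(Q̂(s,a) − Q(s,a))²]. -/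
/-! At a state where the greedy action is not optimal, the gap condition forces the estimate
to be off by at least `Δ / 2` either at an optimal action or at the greedy one. The summed squared
error is then at least `Δ² / 4`, and Markov's inequality bounds the probability of such states;
the factor `A` undoes the averaging over actions. -/

open MeasureTheory Finset

/-- Let `𝒟` be a distribution over `𝒮 × 𝒜` with uniform conditional
action distribution, i.e. `𝒟 = μ ⊗ Unif(𝒜)` with `𝒮`-marginal `μ`.  Suppose `Q`
satisfies the gap condition with parameter `Δ > 0` (every maximizer beats every
non-maximizer by at least `Δ`, at every state), `Q̂` is measurable, and `π` is
greedy with respect to `Q̂`.  Then the `μ`-probability that `π(s)` is not a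
maximizer of `Q(s,·)` is at most `(4A/Δ²) ⬝ E_𝒟[(Q̂(s,a) − Q(s,a))²]`,
where `E_𝒟[f] = ∫ s, (∑ a, f s a)/A ∂μ`. -/
theorem greedy_suboptimal_action_probability_bound
    {S : Type*} [MeasurableSpace S] {A : Type*} [Fintype A] [Nonempty A]
    (μ : Measure S) [IsProbabilityMeasure μ]
    (Q Qhat : S → A → ℝ)
    (hQmeas : ∀ a, Measurable fun s => Q s a)
    (hQhatmeas : ∀ a, Measurable fun s => Qhat s a)
    (hint : ∀ a, Integrable (fun s => (Qhat s a - Q s a) ^ 2) μ)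
    (Δ : ℝ) (hΔ : 0 < Δ)
    (hgap : ∀ s, ∀ astar a : A, (∀ b, Q s b ≤ Q s astar) → ¬ (∀ b, Q s b ≤ Q s a) →
      Δ ≤ Q s astar - Q s a)
    (π : S → A) (hπ : ∀ s a, Qhat s a ≤ Qhat s (π s)) :
    (μ {s | ¬ ∀ a, Q s a ≤ Q s (π s)}).toReal
      ≤ (4 * (Fintype.card A : ℝ) / Δ ^ 2) *
          ∫ s, (∑ a, (Qhat s a - Q s a) ^ 2) / (Fintype.card A : ℝ) ∂μ := by
  classical
  -- Markov's inequality for the summed squared error at level `Δ² / 4`.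
  have hmarkov := mul_meas_ge_le_integral_of_nonneg (μ := μ)
    (f := fun s => ∑ a, (Qhat s a - Q s a) ^ 2)
    (Filter.Eventually.of_forall fun s => Finset.sum_nonneg fun a _ => sq_nonneg _)
    (integrable_finsetSum _ fun a _ => hint a) (Δ ^ 2 / 4)
  have hsub : {s | ¬ ∀ a, Q s a ≤ Q s (π s)} ⊆
      {s | Δ ^ 2 / 4 ≤ ∑ a, (Qhat s a - Q s a) ^ 2} := by
    intro s hs
    obtain ⟨astar, hstar⟩ := Finite.exists_max (Q s)
    have hg := hgap s astar (π s) hstar hs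
    have hp := hπ s astar
    have hsingle : ∀ b, (Qhat s b - Q s b) ^ 2 ≤ ∑ a, (Qhat s a - Q s a) ^ 2 := fun b =>
      Finset.single_le_sum (f := fun a => (Qhat s a - Q s a) ^ 2)
        (fun a _ => sq_nonneg _) (Finset.mem_univ b)
    change Δ ^ 2 / 4 ≤ ∑ a, (Qhat s a - Q s a) ^ 2
    -- The errors at `astar` and `π s` add up to at least `Δ`, so one of them is at least `Δ / 2`.
    rcases le_total (Δ / 2) (Q s astar - Qhat s astar) with h | h
    · refine le_trans ?_ (hsingle astar)
      nlinarith
    · refine le_trans ?_ (hsingle (π s))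
      have h' : Δ / 2 ≤ Qhat s (π s) - Q s (π s) := by linarith
      nlinarith
  have hmono : (μ {s | ¬ ∀ a, Q s a ≤ Q s (π s)}).toReal ≤
      μ.real {s | Δ ^ 2 / 4 ≤ ∑ a, (Qhat s a - Q s a) ^ 2} := measureReal_mono hsub
  have hA : (0 : ℝ) < Fintype.card A := by exact_mod_cast Fintype.card_pos
  rw [integral_div]
  have hrw : ∀ I : ℝ, 4 * (Fintype.card A : ℝ) / Δ ^ 2 * (I / Fintype.card A) =
      I / (Δ ^ 2 / 4) := by
    intro I
    field_simp
  rw [hrw, le_div_iff₀ (by positivity), mul_comm]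
  exact (mul_le_mul_of_nonneg_left hmono (by positivity)).trans hmarkov
end

section
/- If a deterministic finite-horizon MDP is k-QVI-solvable with k-gap Δ_k > 0, then with probability at least 1 − δ, the GORP algorithm run with lookahead k and a suitable number m of rollouts per action sequence returns an optimal policy, with sample complexity at most O( k T² A^{H̄_k} log(T A / δ) ), where H̄_k = k + log_A(1/Δ_k²) is the stochastic effective horizon at level k. -/
/-! The gap turns exact value comparison into comparison up to error `Δ / 2`, so the proof splits
into a deterministic and a probabilistic half.

*Deterministic half.* For a fixed prefix, the expected return of a lookahead sequence `c`
followed by uniformly random actions is `lookVal` (`sum_rfrom_mix`), and the maximum of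
`lookVal` over sequences with first action `a` is `Q^k(s, a)`
(`lookVal_le_Qiter`, `exists_lookVal_eq_Qiter`). Hence, if every empirical mean is within `Δ / 2`
of its expectation, the learned action is a maximizer of `Q^k` at every state actually visited
(`gorpAct_greedy`). Extending the learned actions by arbitrary greedy choices off this path gives
a greedy policy with the same return, which solvability makes optimal (`optimal_of_good`).

*Probabilistic half.* The prefix used at iteration `i` depends only on the samples of earlier
iterations, so resampling the coordinate `(i, c)` alone leaves it unchanged. With all the other
coordinates frozen, the returns of the `m` episodes are i.i.d. and within `1` of their mean, and
a Chernoff bound gives deviation probability at most `2 exp (-m Δ² / 16)` (`deviation_card_le`,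
`bad_card_le`). A union bound over the `T A^k` coordinates leaves failure probability at most
`2 T A^k exp (-m Δ² / 16)`, which is at most `δ` for `m = ⌈32 k log (T A / δ) / Δ²⌉`. -/

open Finset

/-- A deterministic finite-horizon MDP: finite state and action spaces, a fixed
initial state `s0`, deterministic transitions `step`, and rewards `R`.
Timesteps are 0-based: `t ∈ {0, …, T-1}`. -/
structure DetMDP where
  T : ℕ
  S : Type
  A : Type
  [fS : Fintype S]
  [fA : Fintype A]
  [dS : DecidableEq S]
  [dA : DecidableEq A]
  [nS : Nonempty S]
  [nA : Nonempty A]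
  s0 : S
  step : ℕ → S → A → S
  R : ℕ → S → A → ℝ

attribute [instance] DetMDP.fS DetMDP.fA DetMDP.dS DetMDP.dA DetMDP.nS DetMDP.nA

namespace DetMDP

variable (D : DetMDP)

/-- The state at time `t` reached from `s0` by playing the action sequence `act`. -/
def statesFrom (act : ℕ → D.A) : ℕ → D.S
  | 0 => D.s0
  | t + 1 => D.step t (statesFrom act t) (act t)

/-- The total return of an open-loop action sequence, from timestep `i` onwards. -/
noncomputable def returnFrom (act : ℕ → D.A) (i : ℕ) : ℝ :=
  ∑ t ∈ Finset.Ico i D.T, D.R t (D.statesFrom act t) (act t)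

/-- The total reward of every trajectory lies in `[0,1]`. -/
def RewardBounded : Prop :=
  ∀ act : ℕ → D.A, 0 ≤ D.returnFrom act 0 ∧ D.returnFrom act 0 ≤ 1

/-- `σ` is a (stochastic, Markovian, time-dependent) policy. -/
def IsPolicy (σ : ℕ → D.S → D.A → ℝ) : Prop :=
  (∀ t s a, 0 ≤ σ t s a) ∧ ∀ t s, ∑ a, σ t s a = 1

/-- The value function `V^σ_t(s)` of a stochastic policy. -/
noncomputable def V (σ : ℕ → D.S → D.A → ℝ) (t : ℕ) (s : D.S) : ℝ :=
  if t < D.T then ∑ a, σ t s a * (D.R t s a + V σ (t + 1) (D.step t s a)) else 0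
termination_by D.T - t
decreasing_by omega

/-- The expected return of a policy (from the fixed initial state). -/
noncomputable def J (σ : ℕ → D.S → D.A → ℝ) : ℝ := D.V σ 0 D.s0

/-- The Q-function of a policy. -/
noncomputable def Qpol (σ : ℕ → D.S → D.A → ℝ) (t : ℕ) (s : D.S) (a : D.A) : ℝ :=
  D.R t s a + D.V σ (t + 1) (D.step t s a)

/-- The uniformly random policy. -/
noncomputable def randPol : ℕ → D.S → D.A → ℝ := fun _ _ _ => (Fintype.card D.A : ℝ)⁻¹

/-- `max_a q(s,a)`. -/
noncomputable def vmax (q : D.S → D.A → ℝ) (s : D.S) : ℝ :=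
  univ.sup' univ_nonempty (q s)

/-- One step of Q-value iteration (deterministic transitions). -/
noncomputable def QVI (q : ℕ → D.S → D.A → ℝ) (t : ℕ) (s : D.S) (a : D.A) : ℝ :=
  D.R t s a + if t + 1 < D.T then D.vmax (q (t + 1)) (D.step t s a) else 0

/-- `Qiter i` is the paper's `Q^{i+1}` (0-based): `Qiter 0 = Q^{π^rand}` and
`Qiter (i+1) = QVI (Qiter i)`; the paper's `Q^k` is `Qiter (k-1)`. -/
noncomputable def Qiter : ℕ → ℕ → D.S → D.A → ℝ
  | 0 => D.Qpol D.randPol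
  | i + 1 => D.QVI (Qiter i)

/-- A deterministic policy is greedy w.r.t. a Q-function if it always picks a
maximizing action. -/
def Greedy (q : ℕ → D.S → D.A → ℝ) (π : ℕ → D.S → D.A) : Prop :=
  ∀ t, t < D.T → ∀ s a, q t s a ≤ q t s (π t s)

/-- A deterministic policy, viewed as a stochastic policy. -/
def det (π : ℕ → D.S → D.A) : ℕ → D.S → D.A → ℝ := fun t s a => if a = π t s then 1 else 0

/-- The MDP is `k`-QVI-solvable if every policy greedy w.r.t. `Q^k` is optimal. -/
def QVISolvable (k : ℕ) : Prop :=
  ∀ π : ℕ → D.S → D.A, D.Greedy (D.Qiter (k - 1)) π →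
    ∀ σ, D.IsPolicy σ → D.J σ ≤ D.J (D.det π)

/-- The `k`-gap of the MDP is at least `Δ`: at every timestep and state, every
non-maximal value of `Q^k(s,·)` is at least `Δ` below the maximum. -/
def GapAtLeast (k : ℕ) (Δ : ℝ) : Prop :=
  ∀ t, t < D.T → ∀ s a, D.Qiter (k - 1) t s a < D.vmax (D.Qiter (k - 1) t) s →
    D.Qiter (k - 1) t s a + Δ ≤ D.vmax (D.Qiter (k - 1) t) s

/-- An element of `β` maximizing `f`. -/
noncomputable def pick {β : Type*} [Fintype β] [Nonempty β] (f : β → ℝ) : β :=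
  Classical.choose (Finset.exists_max_image univ f univ_nonempty)

/-- The sample space of GORP: for each of the `T` iterations, each `k`-long
action sequence, and each of the `m` episodes, the uniformly random actions used
for the random rollout.  All coordinates are independent and uniform, so the
distribution of the whole sample is uniform on this finite space. -/
abbrev GorpΩ (k m : ℕ) := Fin D.T → (Fin k → D.A) → Fin m → Fin D.T → D.A

/-- The open-loop action sequence learned by GORP with lookahead `k` and `m`
rollouts per action sequence, given the randomness `ω`: at iteration `i`, for
each `k`-long action sequence it plays the previously learned actions, then the
sequence, then random actions, and fixes the `i`-th action to be the first
action of the sequence with the highest mean return over the `m` episodes. -/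
noncomputable def gorpAct (k m : ℕ) (ω : D.GorpΩ k m) : ℕ → D.A
  | i =>
    if hk : 0 < k then
      if hi : i < D.T then
        pick (fun c : Fin k → D.A =>
          (1 / (m : ℝ)) * ∑ j : Fin m,
            D.returnFrom (fun t =>
              if ht : t < i then gorpAct k m ω t
              else if ht' : t - i < k then c ⟨t - i, ht'⟩
              else if ht'' : t < D.T then ω ⟨i, hi⟩ c j ⟨t, ht''⟩
              else Classical.arbitrary D.A) i)
          ⟨0, hk⟩
      else Classical.arbitrary D.A
    else Classical.arbitrary D.A
termination_by i => i
decreasing_by omega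

end DetMDP

/-! ### Averaging over one coordinate of a finite product -/

/-- Summing over a finite product is unchanged, up to the size of the factor, by first
resampling a single coordinate. -/
lemma sum_sum_update {ι β : Type*} [Fintype ι] [DecidableEq ι] [Fintype β]
    (i : ι) (F : (ι → β) → ℝ) :
    ∑ ω : ι → β, ∑ b : β, F (Function.update ω i b) = (Fintype.card β : ℝ) * ∑ ω, F ω := by
  classical
  have key : ∀ G : (ι → β) → ℝ, ∑ ω, G ω
      = ∑ p : β × ({j // j ≠ i} → β), G ((Equiv.funSplitAt i β).symm p) := fun G =>
    ((Equiv.funSplitAt i β).symm.sum_comp G).symm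
  rw [key, key F, Fintype.sum_prod_type, Fintype.sum_prod_type]
  have hu : ∀ (x b : β) (y : {j // j ≠ i} → β),
      Function.update ((Equiv.funSplitAt i β).symm (x, y)) i b
        = (Equiv.funSplitAt i β).symm (b, y) := by
    intro x b y
    ext j
    by_cases h : j = i
    · subst h; simp [Equiv.funSplitAt, Equiv.piSplitAt]
    · simp [Equiv.funSplitAt, Equiv.piSplitAt, h]
  simp only [hu]
  rw [Finset.sum_const, Finset.card_univ, nsmul_eq_mul, Finset.sum_comm]

/-- If an event has conditional frequency at most `ε` given all coordinates but one, then its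
overall frequency is at most `ε`. -/
lemma card_le_of_update {ι β : Type*} [Fintype ι] [DecidableEq ι] [Fintype β] [Nonempty β]
    (i : ι) (P : (ι → β) → Prop) [DecidablePred P] (ε : ℝ)
    (h : ∀ ω : ι → β, ((univ.filter (fun b => P (Function.update ω i b))).card : ℝ)
      ≤ ε * Fintype.card β) :
    ((univ.filter P).card : ℝ) ≤ ε * Fintype.card (ι → β) := by
  have hc : (0 : ℝ) < Fintype.card β := by exact_mod_cast Fintype.card_pos
  have h1 := sum_sum_update i (fun ω => if P ω then (1 : ℝ) else 0)
  have h2 : ∑ ω : ι → β, ∑ b : β, (if P (Function.update ω i b) then (1 : ℝ) else 0)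
      ≤ ∑ ω : ι → β, ε * Fintype.card β := by
    refine Finset.sum_le_sum fun ω _ => ?_
    rw [Finset.sum_boole]
    exact h ω
  rw [h1, Finset.sum_boole, Finset.sum_const, Finset.card_univ, nsmul_eq_mul] at h2
  nlinarith [h2]

/-! ### A Chernoff bound for uniform samples -/

/-- One-sided Chernoff bound by counting, for a centred function bounded by `1`. -/
lemma chernoff_card_le {β : Type*} [Fintype β] [Nonempty β] (Y : β → ℝ)
    (h0 : ∑ b, Y b = 0) (h1 : ∀ b, |Y b| ≤ 1) (m : ℕ) (Δ : ℝ) (hΔ : 0 < Δ) (hΔ1 : Δ ≤ 1)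
    (P : (Fin m → β) → Prop) [DecidablePred P]
    (hP : ∀ f, P f → m * (Δ / 2) ≤ ∑ j, Y (f j)) :
    ((univ.filter P).card : ℝ)
      ≤ Real.exp (-(m * Δ ^ 2 / 16)) * Fintype.card (Fin m → β) := by
  have hc : (0 : ℝ) < Fintype.card β := by exact_mod_cast Fintype.card_pos
  -- The exponent `s = Δ / 4` minimizes `s² - s Δ / 2`.
  have hmgf : ∑ b, Real.exp (Δ / 4 * Y b) ≤ Fintype.card β * Real.exp (Δ ^ 2 / 16) := by
    have hb : ∀ b, Real.exp (Δ / 4 * Y b) ≤ 1 + Δ / 4 * Y b + Δ ^ 2 / 16 := by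
      intro b
      have hy := abs_le.mp (h1 b)
      have hy2 : Y b ^ 2 ≤ 1 := by nlinarith
      have hab : |Δ / 4 * Y b| ≤ 1 := by
        rw [abs_mul, abs_of_pos (by positivity)]
        nlinarith [h1 b, abs_nonneg (Y b)]
      have := (abs_le.mp (Real.abs_exp_sub_one_sub_id_le hab)).2
      nlinarith [mul_le_mul_of_nonneg_left hy2 (sq_nonneg Δ)]
    calc ∑ b, Real.exp (Δ / 4 * Y b) ≤ ∑ b, (1 + Δ / 4 * Y b + Δ ^ 2 / 16) :=
          Finset.sum_le_sum fun b _ => hb b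
      _ = Fintype.card β * (Δ ^ 2 / 16 + 1) := by
          rw [Finset.sum_add_distrib, Finset.sum_add_distrib, ← Finset.mul_sum, h0]
          simp; ring
      _ ≤ _ := by gcongr; exact Real.add_one_le_exp _
  have hprod : ∑ f : Fin m → β, Real.exp (Δ / 4 * ∑ j, Y (f j))
      = (∑ b, Real.exp (Δ / 4 * Y b)) ^ m := by
    rw [Fintype.sum_pow]
    refine Finset.sum_congr rfl fun f _ => ?_
    rw [Finset.mul_sum, Real.exp_sum]
  have hmarkov : ((univ.filter P).card : ℝ) * Real.exp (Δ / 4 * (m * (Δ / 2)))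
      ≤ ∑ f : Fin m → β, Real.exp (Δ / 4 * ∑ j, Y (f j)) := by
    rw [← nsmul_eq_mul, ← Finset.sum_const]
    calc _ ≤ ∑ f ∈ univ.filter P, Real.exp (Δ / 4 * ∑ j, Y (f j)) := by
          refine Finset.sum_le_sum fun f hf => ?_
          have := hP f (Finset.mem_filter.mp hf).2
          gcongr
      _ ≤ _ := Finset.sum_le_sum_of_subset_of_nonneg (Finset.filter_subset _ _)
          fun _ _ _ => (Real.exp_pos _).le
  rw [hprod] at hmarkov
  have hpow : (∑ b, Real.exp (Δ / 4 * Y b)) ^ m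
      ≤ (Fintype.card β : ℝ) ^ m * Real.exp (m * (Δ ^ 2 / 16)) := by
    rw [Real.exp_nat_mul, ← mul_pow]
    exact pow_le_pow_left₀ (Finset.sum_nonneg fun _ _ => (Real.exp_pos _).le) hmgf m
  have hfin := hmarkov.trans hpow
  rw [← le_div_iff₀ (Real.exp_pos _), mul_div_assoc, ← Real.exp_sub] at hfin
  refine hfin.trans (le_of_eq ?_)
  rw [Fintype.card_fun, Fintype.card_fin, mul_comm]
  push_cast
  congr 2
  ring

/-- The uniform average of a real function on a finite type. -/
noncomputable def avg {β : Type*} [Fintype β] (X : β → ℝ) : ℝ :=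
  (Fintype.card β : ℝ)⁻¹ * ∑ b, X b

lemma card_mul_avg {β : Type*} [Fintype β] [Nonempty β] (X : β → ℝ) :
    (Fintype.card β : ℝ) * avg X = ∑ b, X b := by
  have hc : (Fintype.card β : ℝ) ≠ 0 := by exact_mod_cast Fintype.card_ne_zero
  rw [avg, mul_inv_cancel_left₀ hc]

lemma avg_eq_iff {β : Type*} [Fintype β] [Nonempty β] (X : β → ℝ) (v : ℝ) :
    avg X = v ↔ ∑ b, X b = (Fintype.card β : ℝ) * v := by
  have hc : (Fintype.card β : ℝ) ≠ 0 := by exact_mod_cast Fintype.card_ne_zero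
  rw [← card_mul_avg X, mul_right_inj' hc]

lemma abs_sub_avg_le {β : Type*} [Fintype β] [Nonempty β] (X : β → ℝ)
    (h : ∀ b b', X b - X b' ≤ 1) (b : β) : |X b - avg X| ≤ 1 := by
  have hc : (0 : ℝ) < Fintype.card β := by exact_mod_cast Fintype.card_pos
  have e := card_mul_avg X
  have h1 : ∑ b', X b' ≤ ∑ _b' : β, (X b + 1) :=
    Finset.sum_le_sum fun b' _ => by linarith [h b' b]
  have h2 : ∑ _b' : β, (X b - 1) ≤ ∑ b', X b' :=
    Finset.sum_le_sum fun b' _ => by linarith [h b b']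
  rw [Finset.sum_const, Finset.card_univ, nsmul_eq_mul, ← e] at h1 h2
  have h3 := le_of_mul_le_mul_left h1 hc
  have h4 := le_of_mul_le_mul_left h2 hc
  rw [abs_le]
  constructor <;> linarith

/-- Two-sided deviation bound for the empirical mean of `m` uniform samples. -/
lemma deviation_card_le {β : Type*} [Fintype β] [Nonempty β] (X : β → ℝ)
    (h : ∀ b b', X b - X b' ≤ 1) (m : ℕ) (hm : 1 ≤ m) (Δ : ℝ) (hΔ : 0 < Δ) (hΔ1 : Δ ≤ 1)
    (P : (Fin m → β) → Prop) [DecidablePred P]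
    (hP : ∀ f, P f → Δ / 2 ≤ |(1 / (m : ℝ)) * ∑ j, X (f j) - avg X|) :
    ((univ.filter P).card : ℝ)
      ≤ (2 * Real.exp (-(m * Δ ^ 2 / 16))) * Fintype.card (Fin m → β) := by
  classical
  have hm0 : (0 : ℝ) < m := by exact_mod_cast hm
  have hz : ∑ b, (X b - avg X) = 0 := by
    rw [Finset.sum_sub_distrib, ← card_mul_avg X]; simp
  have hrew : ∀ f : Fin m → β,
      ∑ j, (X (f j) - avg X) = m * ((1 / (m : ℝ)) * ∑ j, X (f j) - avg X) := by
    intro f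
    rw [Finset.sum_sub_distrib]
    field_simp
    simp
  have up := chernoff_card_le (fun b => X b - avg X) hz (abs_sub_avg_le X h) m Δ hΔ hΔ1
    (fun f => m * (Δ / 2) ≤ ∑ j, (X (f j) - avg X)) (fun f hf => hf)
  have dn := chernoff_card_le (fun b => -(X b - avg X)) (by rw [Finset.sum_neg_distrib, hz, neg_zero])
    (fun b => by rw [abs_neg]; exact abs_sub_avg_le X h b) m Δ hΔ hΔ1
    (fun f => m * (Δ / 2) ≤ ∑ j, -(X (f j) - avg X)) (fun f hf => hf)
  have hsub : univ.filter P ⊆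
      univ.filter (fun f : Fin m → β => m * (Δ / 2) ≤ ∑ j, (X (f j) - avg X)) ∪
      univ.filter (fun f : Fin m → β => m * (Δ / 2) ≤ ∑ j, -(X (f j) - avg X)) := by
    intro f hf
    have h1 := hP f (Finset.mem_filter.mp hf).2
    simp only [Finset.mem_union, Finset.mem_filter, Finset.mem_univ, true_and,
      Finset.sum_neg_distrib, hrew]
    rcases le_abs.mp h1 with h2 | h2
    · left; gcongr
    · right; rw [← mul_neg]; gcongr
  have hcard : ((univ.filter P).card : ℝ) ≤ _ := Nat.cast_le.mpr
    ((Finset.card_le_card hsub).trans (Finset.card_union_le _ _))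
  push_cast at hcard
  linarith

namespace DetMDP

variable (D : DetMDP)

/-! ### Returns and lookahead values -/

/-- The return collected from state `s` at time `t` on by the open-loop actions `act`. -/
noncomputable def rfrom (act : ℕ → D.A) (t : ℕ) (s : D.S) : ℝ :=
  if t < D.T then D.R t s (act t) + rfrom act (t + 1) (D.step t s (act t)) else 0
termination_by D.T - t
decreasing_by omega

lemma rfrom_of_lt (act : ℕ → D.A) (t : ℕ) (s : D.S) (h : t < D.T) :
    D.rfrom act t s = D.R t s (act t) + D.rfrom act (t + 1) (D.step t s (act t)) := by
  rw [rfrom, if_pos h]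

lemma rfrom_of_not_lt (act : ℕ → D.A) (t : ℕ) (s : D.S) (h : ¬ t < D.T) :
    D.rfrom act t s = 0 := by
  rw [rfrom, if_neg h]

lemma returnFrom_eq_rfrom (act : ℕ → D.A) (t : ℕ) :
    D.returnFrom act t = D.rfrom act t (D.statesFrom act t) := by
  by_cases h : t < D.T
  · rw [rfrom, if_pos h, returnFrom, Finset.sum_eq_sum_Ico_succ_bot h]
    have := returnFrom_eq_rfrom act (t + 1)
    rw [returnFrom, statesFrom] at this
    rw [this]
  · rw [rfrom, if_neg h, returnFrom, Finset.Ico_eq_empty (by omega), Finset.sum_empty]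
termination_by D.T - t

lemma rfrom_congr (act act' : ℕ → D.A) (t : ℕ) (s : D.S)
    (h : ∀ u, t ≤ u → u < D.T → act u = act' u) : D.rfrom act t s = D.rfrom act' t s := by
  by_cases ht : t < D.T
  · rw [rfrom_of_lt _ _ _ _ ht, rfrom_of_lt _ _ _ _ ht, h t le_rfl ht,
      rfrom_congr act act' (t + 1) _ fun u hu => h u (by omega)]
  · rw [rfrom_of_not_lt _ _ _ _ ht, rfrom_of_not_lt _ _ _ _ ht]
termination_by D.T - t

lemma statesFrom_congr (act act' : ℕ → D.A) (t : ℕ) (h : ∀ u, u < t → act u = act' u) :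
    D.statesFrom act t = D.statesFrom act' t := by
  induction t with
  | zero => rfl
  | succ t ih =>
    rw [statesFrom, statesFrom, ih fun u hu => h u (by omega), h t (by omega)]

/-- The value of playing `c t, …, c (t + j - 1)` from state `s` at time `t`, and uniformly random
actions afterwards. Lookahead actions are indexed by absolute time. -/
noncomputable def lookVal (c : ℕ → D.A) : ℕ → ℕ → D.S → ℝ
  | 0, t, s => D.V D.randPol t s
  | j + 1, t, s =>
    if t < D.T then D.R t s (c t) + lookVal c j (t + 1) (D.step t s (c t)) else 0

lemma lookVal_congr (c c' : ℕ → D.A) (j t : ℕ) (s : D.S)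
    (h : ∀ u, t ≤ u → u < t + j → c u = c' u) : D.lookVal c j t s = D.lookVal c' j t s := by
  induction j generalizing t s with
  | zero => rfl
  | succ j ih =>
    rw [lookVal, lookVal, h t le_rfl (by omega),
      ih (t + 1) _ fun u hu hu' => h u (by omega) (by omega)]

lemma lookVal_of_le (c : ℕ → D.A) (j t : ℕ) (s : D.S) (h : D.T ≤ t) :
    D.lookVal c j t s = 0 := by
  cases j with
  | zero => rw [lookVal, V, if_neg (by omega)]
  | succ j => rw [lookVal, if_neg (by omega)]

lemma le_vmax (q : D.S → D.A → ℝ) (s : D.S) (a : D.A) : q s a ≤ D.vmax q s :=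
  Finset.le_sup' (q s) (Finset.mem_univ a)

lemma exists_eq_vmax (q : D.S → D.A → ℝ) (s : D.S) : ∃ a, q s a = D.vmax q s := by
  obtain ⟨a, -, h⟩ := Finset.exists_mem_eq_sup' univ_nonempty (q s)
  exact ⟨a, h.symm⟩

lemma lookVal_le_Qiter (c : ℕ → D.A) (j t : ℕ) (s : D.S) (ht : t < D.T) :
    D.lookVal c (j + 1) t s ≤ D.Qiter j t s (c t) := by
  induction j generalizing t s with
  | zero => rw [lookVal, if_pos ht, Qiter, Qpol, lookVal]
  | succ j ih =>
    rw [lookVal, if_pos ht, Qiter, QVI]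
    split_ifs with h
    · have := (ih (t + 1) (D.step t s (c t)) h).trans (D.le_vmax _ _ _)
      linarith
    · rw [lookVal_of_le _ _ _ _ _ (by omega)]

lemma exists_lookVal_eq_Qiter (j t : ℕ) (s : D.S) (a : D.A) (ht : t < D.T) :
    ∃ c : ℕ → D.A, c t = a ∧ D.lookVal c (j + 1) t s = D.Qiter j t s a := by
  induction j generalizing t s a with
  | zero => exact ⟨fun _ => a, rfl, by rw [lookVal, if_pos ht, Qiter, Qpol, lookVal]⟩
  | succ j ih =>
    by_cases h : t + 1 < D.T
    · obtain ⟨a', ha'⟩ := D.exists_eq_vmax (D.Qiter j (t + 1)) (D.step t s a)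
      obtain ⟨c, -, hc⟩ := ih (t + 1) (D.step t s a) a' h
      refine ⟨Function.update c t a, by simp, ?_⟩
      rw [lookVal, if_pos ht, Qiter, QVI, if_pos h, Function.update_self, ← ha', ← hc,
        lookVal_congr D (Function.update c t a) c]
      intro u hu _
      rw [Function.update_of_ne (by omega)]
    · refine ⟨fun _ => a, rfl, ?_⟩
      rw [lookVal, if_pos ht, Qiter, QVI, if_neg h, lookVal_of_le _ _ _ _ _ (by omega)]

/-- The open-loop actions that follow `e` before time `n` and the rollout `b` from then on. -/
noncomputable def mix (e : ℕ → D.A) (n : ℕ) (b : Fin D.T → D.A) (u : ℕ) : D.A :=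
  if u < n then e u else if h : u < D.T then b ⟨u, h⟩ else Classical.arbitrary D.A

/-- Past the time `n` at which the rollout takes over, the expected return is the value of the
random policy: the action at `t` is uniform and independent of the later ones. -/
lemma sum_rfrom_mix_rand (e : ℕ → D.A) (n t : ℕ) (hn : n ≤ t) (s : D.S) :
    ∑ b : Fin D.T → D.A, D.rfrom (D.mix e n b) t s
      = (Fintype.card (Fin D.T → D.A) : ℝ) * D.V D.randPol t s := by
  by_cases ht : t < D.T
  · have hc : (Fintype.card D.A : ℝ) ≠ 0 := by exact_mod_cast Fintype.card_ne_zero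
    have hup := sum_sum_update (⟨t, ht⟩ : Fin D.T)
      (fun b : Fin D.T → D.A => D.rfrom (D.mix e n b) t s)
    have hstep : ∀ (b : Fin D.T → D.A) (a : D.A),
        D.rfrom (D.mix e n (Function.update b ⟨t, ht⟩ a)) t s
          = D.R t s a + D.rfrom (D.mix e n b) (t + 1) (D.step t s a) := by
      intro b a
      have hta : D.mix e n (Function.update b ⟨t, ht⟩ a) t = a := by
        rw [mix, if_neg (by omega), dif_pos ht, Function.update_self]
      rw [rfrom, if_pos ht, hta]
      congr 1
      refine D.rfrom_congr _ _ _ _ fun u hu hu' => ?_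
      rw [mix, mix, if_neg (by omega), if_neg (by omega), dif_pos hu', dif_pos hu',
        Function.update_of_ne]
      intro h
      have := congrArg Fin.val h
      simp at this
      omega
    simp only [hstep] at hup
    rw [Finset.sum_comm] at hup
    simp only [Finset.sum_add_distrib,
      fun a : D.A => sum_rfrom_mix_rand e n (t + 1) (by omega) (D.step t s a)] at hup
    rw [V, if_pos ht]
    apply mul_left_cancel₀ hc
    rw [← hup]
    simp only [randPol]
    simp only [Finset.sum_const, Finset.card_univ, nsmul_eq_mul]
    rw [← Finset.mul_sum, ← Finset.mul_sum, ← mul_add, ← Finset.sum_add_distrib,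
      ← Finset.mul_sum]
    field_simp
  · have h0 : D.V D.randPol t s = 0 := by rw [V, if_neg ht]
    rw [h0, mul_zero]
    refine Finset.sum_eq_zero fun b _ => ?_
    rw [rfrom, if_neg ht]
termination_by D.T - t

/-- The expected return of a lookahead sequence followed by a uniform rollout. -/
lemma sum_rfrom_mix (e : ℕ → D.A) (j t : ℕ) (s : D.S) :
    ∑ b : Fin D.T → D.A, D.rfrom (D.mix e (t + j) b) t s
      = (Fintype.card (Fin D.T → D.A) : ℝ) * D.lookVal e j t s := by
  induction j generalizing t s with
  | zero => rw [lookVal]; exact D.sum_rfrom_mix_rand e t t le_rfl s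
  | succ j ih =>
    by_cases ht : t < D.T
    · have hstep : ∀ b : Fin D.T → D.A, D.rfrom (D.mix e (t + (j + 1)) b) t s
          = D.R t s (e t) + D.rfrom (D.mix e (t + 1 + j) b) (t + 1) (D.step t s (e t)) := by
        intro b
        have hta : D.mix e (t + (j + 1)) b t = e t := by rw [mix, if_pos (by omega)]
        rw [rfrom, if_pos ht, hta, show t + (j + 1) = t + 1 + j by omega]
      simp only [hstep]
      rw [Finset.sum_add_distrib, ih, lookVal, if_pos ht, Finset.sum_const, Finset.card_univ,
        nsmul_eq_mul, mul_add]
    · rw [lookVal, if_neg ht, mul_zero]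
      refine Finset.sum_eq_zero fun b _ => ?_
      rw [rfrom, if_neg ht]

/-! ### The learned actions -/

/-- The actions of an evaluation episode at iteration `i` before the random rollout: the prefix
`p` before time `i`, then the lookahead sequence `c`. -/
noncomputable def probe (k : ℕ) (p : ℕ → D.A) (i : ℕ) (c : Fin k → D.A) (t : ℕ) : D.A :=
  if t < i then p t
  else if h : t - i < k then c ⟨t - i, h⟩ else Classical.arbitrary D.A

/-- The return from timestep `i` on of an evaluation episode with rollout `b`. -/
noncomputable def epRet (k : ℕ) (p : ℕ → D.A) (i : ℕ) (c : Fin k → D.A)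
    (b : Fin D.T → D.A) : ℝ :=
  D.returnFrom (D.mix (D.probe k p i c) (i + k) b) i

lemma probe_congr (k : ℕ) (p p' : ℕ → D.A) (i : ℕ) (c : Fin k → D.A)
    (h : ∀ t, t < i → p t = p' t) : D.probe k p i c = D.probe k p' i c := by
  funext t
  unfold probe
  split_ifs with h1
  · exact h t h1
  all_goals rfl

lemma epRet_congr (k : ℕ) (p p' : ℕ → D.A) (i : ℕ) (c : Fin k → D.A) (b : Fin D.T → D.A)
    (h : ∀ t, t < i → p t = p' t) : D.epRet k p i c b = D.epRet k p' i c b := by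
  rw [epRet, epRet, D.probe_congr k p p' i c h]

lemma gorpAct_eq (k m : ℕ) (ω : D.GorpΩ k m) (i : ℕ) (hk : 0 < k) (hi : i < D.T) :
    D.gorpAct k m ω i = pick (fun c : Fin k → D.A =>
      (1 / (m : ℝ)) * ∑ j : Fin m, D.epRet k (D.gorpAct k m ω) i c (ω ⟨i, hi⟩ c j))
        ⟨0, hk⟩ := by
  rw [gorpAct, dif_pos hk, dif_pos hi]
  refine congrFun (congrArg pick (funext fun c => ?_)) _
  congr 1
  refine Finset.sum_congr rfl fun j _ => ?_
  rw [epRet]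
  congr 1
  funext t
  unfold mix probe
  by_cases h1 : t < i
  · simp [h1, show t < i + k by omega]
  · by_cases h2 : t - i < k
    · simp [h1, h2, show t < i + k by omega]
    · simp [h1, h2, show ¬ t < i + k by omega]

/-- The actions learned before time `i` depend only on the samples of earlier iterations. -/
lemma gorpAct_congr (k m : ℕ) (ω ω' : D.GorpΩ k m) (i : ℕ)
    (h : ∀ i' : Fin D.T, i'.val < i → ω i' = ω' i') (t : ℕ) (ht : t < i) :
    D.gorpAct k m ω t = D.gorpAct k m ω' t := by
  induction t using Nat.strong_induction_on with
  | _ t ih =>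
    by_cases hk : 0 < k
    · by_cases hT : t < D.T
      · rw [D.gorpAct_eq k m ω t hk hT, D.gorpAct_eq k m ω' t hk hT, h ⟨t, hT⟩ ht]
        refine congrFun (congrArg pick (funext fun c => ?_)) _
        congr 1
        exact Finset.sum_congr rfl fun j _ =>
          D.epRet_congr k _ _ t c _ fun u hu => ih u hu (by omega)
      · rw [gorpAct, gorpAct, dif_pos hk, dif_pos hk, dif_neg hT, dif_neg hT]
    · rw [gorpAct, gorpAct, dif_neg hk, dif_neg hk]

lemma mix_probe_of_lt (k : ℕ) (p : ℕ → D.A) (i : ℕ) (c : Fin k → D.A) (b : Fin D.T → D.A)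
    (t : ℕ) (h : t < i) : D.mix (D.probe k p i c) (i + k) b t = p t := by
  rw [mix, if_pos (by omega), probe, if_pos h]

lemma avg_epRet (k : ℕ) (p : ℕ → D.A) (i : ℕ) (c : Fin k → D.A) :
    avg (D.epRet k p i c) = D.lookVal (D.probe k p i c) k i (D.statesFrom p i) := by
  rw [avg_eq_iff, ← D.sum_rfrom_mix]
  refine Finset.sum_congr rfl fun b _ => ?_
  rw [epRet, returnFrom_eq_rfrom, D.statesFrom_congr _ p i fun u hu =>
    D.mix_probe_of_lt k p i c b u hu]

/-- Returns from time `i` on with a common prefix differ by at most `1`, although each of them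
may lie outside `[0, 1]`. -/
lemma epRet_sub_le (hR : D.RewardBounded) (k : ℕ) (p : ℕ → D.A) (i : ℕ) (hi : i < D.T)
    (c : Fin k → D.A) (b b' : Fin D.T → D.A) :
    D.epRet k p i c b - D.epRet k p i c b' ≤ 1 := by
  have key : ∀ b, D.returnFrom (D.mix (D.probe k p i c) (i + k) b) 0
      = ∑ t ∈ Finset.Ico 0 i, D.R t (D.statesFrom p t) (p t) + D.epRet k p i c b := by
    intro b
    rw [epRet, returnFrom, returnFrom, ← Finset.sum_Ico_consecutive _ (Nat.zero_le i) hi.le]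
    congr 1
    refine Finset.sum_congr rfl fun t ht => ?_
    have ht' := (Finset.mem_Ico.mp ht).2
    rw [D.mix_probe_of_lt k p i c b t ht', D.statesFrom_congr _ p t fun u hu =>
      D.mix_probe_of_lt k p i c b u (by omega)]
  have h1 := (hR (D.mix (D.probe k p i c) (i + k) b)).2
  have h2 := (hR (D.mix (D.probe k p i c) (i + k) b')).1
  rw [key] at h1 h2
  linarith

/-- The estimate for the sequence `c` at iteration `i` is off by at least `Δ / 2`. -/
def Bad (k m : ℕ) (Δ : ℝ) (i : Fin D.T) (c : Fin k → D.A) (ω : D.GorpΩ k m) : Prop :=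
  Δ / 2 ≤ |(1 / (m : ℝ)) * ∑ j : Fin m, D.epRet k (D.gorpAct k m ω) i c (ω i c j)
    - avg (D.epRet k (D.gorpAct k m ω) i c)|

open scoped Classical in
/-- Resampling the coordinate `(i, c)` leaves the prefix of iteration `i` unchanged, which
reduces the bound to a deviation bound for i.i.d. episodes. -/
lemma bad_card_le (hR : D.RewardBounded) (k m : ℕ) (hm : 1 ≤ m) (Δ : ℝ) (hΔ : 0 < Δ)
    (hΔ1 : Δ ≤ 1) (i : Fin D.T) (c : Fin k → D.A) :
    ((univ.filter (D.Bad k m Δ i c)).card : ℝ)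
      ≤ (2 * Real.exp (-(m * Δ ^ 2 / 16))) * Fintype.card (D.GorpΩ k m) := by
  refine card_le_of_update i _ _ fun ω => card_le_of_update c _ _ fun v => ?_
  refine deviation_card_le (D.epRet k (D.gorpAct k m ω) i c)
    (D.epRet_sub_le hR k _ i i.2 c) m hm Δ hΔ hΔ1 _ fun f hf => ?_
  have hep : D.epRet k (D.gorpAct k m (Function.update ω i (Function.update v c f))) i c
      = D.epRet k (D.gorpAct k m ω) i c := by
    ext b
    refine D.epRet_congr k _ _ i c b fun t ht => D.gorpAct_congr k m _ _ i (fun i' hi' => ?_) t ht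
    exact Function.update_of_ne (Fin.ne_of_lt hi') _ _
  unfold Bad at hf
  rw [hep] at hf
  simpa using hf

lemma le_pick {β : Type*} [Fintype β] [Nonempty β] (f : β → ℝ) (b : β) : f b ≤ f (pick f) :=
  (Classical.choose_spec (Finset.exists_max_image univ f univ_nonempty)).2 b (Finset.mem_univ b)

/-- When every estimate is accurate, each learned action maximizes `Q^k` at the state reached. -/
lemma gorpAct_greedy (k m : ℕ) (hk : 1 ≤ k) (Δ : ℝ) (hgap : D.GapAtLeast k Δ)
    (ω : D.GorpΩ k m) (hgood : ∀ i c, ¬ D.Bad k m Δ i c ω) (i : ℕ) (hi : i < D.T) (a : D.A) :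
    D.Qiter (k - 1) i (D.statesFrom (D.gorpAct k m ω) i) a
      ≤ D.Qiter (k - 1) i (D.statesFrom (D.gorpAct k m ω) i) (D.gorpAct k m ω i) := by
  obtain ⟨j, rfl⟩ : ∃ j, k = j + 1 := ⟨k - 1, by omega⟩
  simp only [Nat.add_sub_cancel] at *
  set p := D.gorpAct (j + 1) m ω with hp
  set s := D.statesFrom p i with hs
  have hpi := D.gorpAct_eq (j + 1) m ω i (by omega) hi
  rw [← hp] at hpi
  set est := fun c : Fin (j + 1) → D.A =>
    (1 / (m : ℝ)) * ∑ l : Fin m, D.epRet (j + 1) p i c (ω ⟨i, hi⟩ c l) with hest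
  have hclose : ∀ c, |est c - D.lookVal (D.probe (j + 1) p i c) (j + 1) i s| < Δ / 2 := by
    intro c
    have := hgood ⟨i, hi⟩ c
    unfold Bad at this
    rw [← hp] at this
    dsimp only at this
    rw [D.avg_epRet, not_le] at this
    exact this
  refine (D.le_vmax _ _ _).trans ?_
  by_contra hlt
  rw [not_le] at hlt
  have hg := hgap i hi s (p i) (by simpa using hlt)
  simp only [Nat.add_sub_cancel] at hg
  obtain ⟨a', ha'⟩ := D.exists_eq_vmax (D.Qiter j i) s
  obtain ⟨c', -, hc'⟩ := D.exists_lookVal_eq_Qiter j i s a' hi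
  have h1 := abs_lt.mp (hclose (pick est))
  have h2 := abs_lt.mp (hclose (fun l => c' (i + l)))
  have h3 := le_pick est (fun l => c' (i + l))
  have h4 : D.lookVal (D.probe (j + 1) p i (fun l => c' (i + l))) (j + 1) i s
      = D.lookVal c' (j + 1) i s := by
    refine D.lookVal_congr _ _ _ _ _ fun u hu hu' => ?_
    rw [probe, if_neg (by omega), dif_pos (by omega)]
    congr 1
    simp only
    omega
  have h5 := D.lookVal_le_Qiter (D.probe (j + 1) p i (pick est)) j i s hi
  have h6 : D.probe (j + 1) p i (pick est) i = p i := by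
    rw [probe, if_neg (lt_irrefl i), dif_pos (by omega), hpi]
    simp
  rw [h6] at h5
  rw [h4, hc', ha'] at h2
  linarith [h1.1, h1.2, h2.1, h2.2]

lemma V_det (π : ℕ → D.S → D.A) (act : ℕ → D.A)
    (h : ∀ t, t < D.T → π t (D.statesFrom act t) = act t) (t : ℕ) :
    D.V (D.det π) t (D.statesFrom act t) = D.rfrom act t (D.statesFrom act t) := by
  by_cases ht : t < D.T
  · rw [V, rfrom, if_pos ht, if_pos ht]
    simp only [det, ite_mul, one_mul, zero_mul, Finset.sum_ite_eq', Finset.mem_univ, if_true]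
    rw [h t ht]
    have := V_det π act h (t + 1)
    rw [statesFrom] at this
    rw [this]
  · rw [V, rfrom, if_neg ht, if_neg ht]
termination_by D.T - t

/-- Learned actions that are greedy along their own path extend to a greedy policy with the same
return, which is optimal by solvability. -/
lemma optimal_of_good (k m : ℕ) (hk : 1 ≤ k) (Δ : ℝ) (hgap : D.GapAtLeast k Δ)
    (hsolv : D.QVISolvable k) (ω : D.GorpΩ k m) (hgood : ∀ i c, ¬ D.Bad k m Δ i c ω)
    (σ : ℕ → D.S → D.A → ℝ) (hσ : D.IsPolicy σ) :
    D.J σ ≤ D.returnFrom (D.gorpAct k m ω) 0 := by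
  set p := D.gorpAct k m ω with hp
  let π : ℕ → D.S → D.A := fun t s =>
    if s = D.statesFrom p t then p t else pick (D.Qiter (k - 1) t s)
  have hgr : D.Greedy (D.Qiter (k - 1)) π := by
    intro t ht s a
    by_cases h : s = D.statesFrom p t
    · have := D.gorpAct_greedy k m hk Δ hgap ω hgood t ht a
      simpa [π, h] using this
    · simpa [π, h] using le_pick (D.Qiter (k - 1) t s) a
  have hJ : D.J (D.det π) = D.returnFrom p 0 := by
    rw [returnFrom_eq_rfrom, ← D.V_det π p (fun t _ => by simp [π]) 0]
    rfl
  rw [← hJ]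
  exact hsolv π hgr σ hσ

open scoped Classical in
/-- The union bound over all estimates made by the algorithm. -/
lemma good_ratio_ge (hR : D.RewardBounded) (k m : ℕ) (hm : 1 ≤ m) (Δ : ℝ) (hΔ : 0 < Δ)
    (hΔ1 : Δ ≤ 1) (G : D.GorpΩ k m → Prop) [DecidablePred G]
    (hG : ∀ ω, (∀ i c, ¬ D.Bad k m Δ i c ω) → G ω) :
    1 - D.T * (Fintype.card D.A : ℝ) ^ k * (2 * Real.exp (-(m * Δ ^ 2 / 16)))
      ≤ ((univ.filter G).card : ℝ) / (Fintype.card (D.GorpΩ k m) : ℝ) := by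
  have hc : (0 : ℝ) < Fintype.card (D.GorpΩ k m) := by exact_mod_cast Fintype.card_pos
  have hsub : univ.filter (fun ω => ¬ G ω) ⊆
      (univ : Finset (Fin D.T × (Fin k → D.A))).biUnion
        (fun q => univ.filter (D.Bad k m Δ q.1 q.2)) := by
    intro ω hω
    have h1 : ¬ ∀ i c, ¬ D.Bad k m Δ i c ω := fun h => (Finset.mem_filter.mp hω).2 (hG ω h)
    push Not at h1
    obtain ⟨i, c, h⟩ := h1
    simp only [Finset.mem_biUnion, Finset.mem_filter, Finset.mem_univ, true_and]
    exact ⟨(i, c), h⟩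
  have h1 : ((univ.filter (fun ω => ¬ G ω)).card : ℝ)
      ≤ ∑ q : Fin D.T × (Fin k → D.A), ((univ.filter (D.Bad k m Δ q.1 q.2)).card : ℝ) := by
    exact_mod_cast (Finset.card_le_card hsub).trans Finset.card_biUnion_le
  have h2 := h1.trans (Finset.sum_le_sum fun q _ => D.bad_card_le hR k m hm Δ hΔ hΔ1 q.1 q.2)
  rw [Finset.sum_const, Finset.card_univ, nsmul_eq_mul, Fintype.card_prod, Fintype.card_fin,
    Fintype.card_fun, Fintype.card_fin] at h2
  have h3 : ((univ.filter G).card : ℝ) + ((univ.filter (fun ω => ¬ G ω)).card : ℝ)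
      = Fintype.card (D.GorpΩ k m) := by
    have := Finset.card_filter_add_card_filter_not (s := (univ : Finset (D.GorpΩ k m))) G
    rw [Finset.card_univ] at this
    exact_mod_cast this
  rw [le_div_iff₀ hc]
  push_cast at h2
  linarith

end DetMDP

/-! ### Choice of the number of rollouts -/

/-- With `m = ⌈32 k L / Δ²⌉`, `L = log (T A / δ)`, the union bound is at most `δ`, because
`2 T A^k / δ ≤ (T A / δ)^(2k)`; rounding up costs at most a constant factor, because
`L ≥ log 2`. -/
lemma exists_rollouts (T A k : ℕ) (hA : 2 ≤ A) (hT : 1 ≤ T) (hk : 1 ≤ k) (Δ δ : ℝ)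
    (hΔ : 0 < Δ) (hΔ1 : Δ ≤ 1) (hδ : 0 < δ) (hδ1 : δ ≤ 1) :
    ∃ m : ℕ, 1 ≤ m ∧ (m : ℝ) ≤ 34 * k * Real.log (T * A / δ) / Δ ^ 2 ∧
      T * (A : ℝ) ^ k * (2 * Real.exp (-(m * Δ ^ 2 / 16))) ≤ δ := by
  have hA' : (2 : ℝ) ≤ A := by exact_mod_cast hA
  have hT' : (1 : ℝ) ≤ T := by exact_mod_cast hT
  have hk' : (1 : ℝ) ≤ k := by exact_mod_cast hk
  set x : ℝ := T * A / δ with hx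
  have hTd : 1 ≤ T / δ := by rw [le_div_iff₀ hδ]; linarith
  have hx2 : 2 ≤ x := by
    have : x = T / δ * A := by rw [hx]; ring
    rw [this]; nlinarith
  set L := Real.log x with hL
  have hL1 : 1 / 2 ≤ L := by
    have := Real.log_le_log (by norm_num) hx2
    linarith [Real.log_two_gt_d9]
  have hpos : 0 < 32 * k * L / Δ ^ 2 := by positivity
  refine ⟨⌈32 * k * L / Δ ^ 2⌉₊, Nat.one_le_iff_ne_zero.mpr (Nat.ceil_pos.mpr hpos).ne', ?_, ?_⟩
  · have h1 := (Nat.ceil_lt_add_one hpos.le).le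
    have h2 : 1 ≤ 2 * k * L / Δ ^ 2 := by
      rw [le_div_iff₀ (by positivity)]
      nlinarith
    refine h1.trans ?_
    have : 34 * k * L / Δ ^ 2 = 32 * k * L / Δ ^ 2 + 2 * k * L / Δ ^ 2 := by ring
    linarith
  · have h1 := Nat.le_ceil (32 * k * L / Δ ^ 2)
    rw [div_le_iff₀ (by positivity)] at h1
    have hexp : Real.exp (-((⌈32 * k * L / Δ ^ 2⌉₊ : ℝ) * Δ ^ 2 / 16)) ≤ (x ^ k * x ^ k)⁻¹ := by
      have hxk : Real.exp (k * L) = x ^ k := by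
        rw [Real.exp_nat_mul, hL, Real.exp_log (by linarith)]
      rw [← hxk, ← Real.exp_add, ← Real.exp_neg]
      apply Real.exp_le_exp.mpr
      linarith
    have hxk2 : 2 ≤ x ^ k := hx2.trans (le_self_pow₀ (by linarith) (by omega))
    have hxk : T * (A : ℝ) ^ k ≤ δ * x ^ k := by
      have : x ^ k = (T / δ) ^ k * A ^ k := by rw [hx, ← mul_pow]; congr 1; ring
      rw [this]
      have h3 : T / δ ≤ (T / δ) ^ k := le_self_pow₀ hTd (by omega)
      have h4 : (T : ℝ) ≤ δ * (T / δ) ^ k := by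
        calc (T : ℝ) = δ * (T / δ) := by field_simp
          _ ≤ _ := by gcongr
      calc _ ≤ (δ * (T / δ) ^ k) * (A : ℝ) ^ k := by gcongr
        _ = _ := by ring
    have hy : 0 < x ^ k := by linarith
    calc _ ≤ (δ * x ^ k) * (x ^ k * (x ^ k * x ^ k)⁻¹) := by
          gcongr
      _ = δ := by field_simp

open DetMDP in
open scoped Classical in
/-- Lemma 2, second part: If a deterministic finite-horizon MDP
(with total reward in `[0,1]` and `A = |𝒜| ≥ 2`) is `k`-QVI-solvable with
`k`-gap `Δ_k > 0`, then with probability at least `1 − δ` (over its uniformly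
distributed random rollouts) GORP run with lookahead `k` and a suitable number
`m` of rollouts per action sequence returns an optimal policy, with sample
complexity (total number of environment timesteps, `T` per episode) at most
`O(k T² A^{H̄_k} log(T A / δ))`, where `A^{H̄_k} = A^k / Δ_k²`. -/
theorem gorp_sample_complexity :
    ∃ C : ℝ, 0 < C ∧
      ∀ D : DetMDP, 2 ≤ Fintype.card D.A → 1 ≤ D.T → D.RewardBounded →
        ∀ k : ℕ, 1 ≤ k → k ≤ D.T →
        ∀ Δ : ℝ, 0 < Δ → Δ ≤ 1 → D.GapAtLeast k Δ → D.QVISolvable k →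
        ∀ δ : ℝ, 0 < δ → δ ≤ 1 →
          ∃ m : ℕ, 1 ≤ m ∧
            (D.T * (D.T * (Fintype.card D.A) ^ k * m) : ℝ)
              ≤ C * k * (D.T : ℝ) ^ 2 * ((Fintype.card D.A : ℝ) ^ k / Δ ^ 2) *
                  Real.log (D.T * (Fintype.card D.A) / δ) ∧
            1 - δ ≤
              ((univ.filter (fun ω : D.GorpΩ k m =>
                  ∀ σ, D.IsPolicy σ → D.J σ ≤ D.returnFrom (D.gorpAct k m ω) 0)).card : ℝ)
                / (Fintype.card (D.GorpΩ k m) : ℝ) := by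
  refine ⟨34, by norm_num, fun D hA hT hR k hk _ Δ hΔ hΔ1 hgap hsolv δ hδ hδ1 => ?_⟩
  obtain ⟨m, hm, hmle, hfail⟩ := exists_rollouts D.T (Fintype.card D.A) k hA hT hk Δ δ
    hΔ hΔ1 hδ hδ1
  refine ⟨m, hm, ?_, ?_⟩
  · calc (D.T * (D.T * (Fintype.card D.A) ^ k * m) : ℝ)
        ≤ D.T * (D.T * (Fintype.card D.A) ^ k *
          (34 * k * Real.log (D.T * (Fintype.card D.A) / δ) / Δ ^ 2)) := by gcongr
      _ = _ := by ring
  · exact (sub_le_sub_left hfail 1).trans (D.good_ratio_ge hR k m hm Δ hΔ hΔ1 _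
      fun ω h σ hσ => D.optimal_of_good k m hk Δ hgap hsolv ω h σ hσ)
end
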